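/- arXiv:2412.15788 — 2 statements merged into one kernel-verified Lean document; each statement's English description precedes it below -/
import Mathlib

section
/- Let D be a minimal strong digraph (MSD), C_q a directed cycle of length q contained in D, and D' the digraph obtained from D by deleting all arcs of C_q. Then every non-trivial strong component of D' that contains at most one vertex of C_q contains at least one vertex that is linear in D. -/
/-- A digraph (given by its arc relation `A`) is strongly connected if every vertex
can reach every vertex by a directed path. -/
def StronglyConnected {V : Type*} (A : V → V → Prop) : Prop :=
  ∀ u v : V, Relation.ReflTransGen A u v

/-- A minimal strong digraph: strongly connected, and deleting any arc destroys
strong connectivity. -/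
def IsMSD {V : Type*} (A : V → V → Prop) : Prop :=
  StronglyConnected A ∧
    ∀ a b : V, A a b →
      ¬ StronglyConnected (fun x y => A x y ∧ ¬(x = a ∧ y = b))

/-- `c : ZMod q → V` describes a directed cycle of length `q` contained in the digraph `A`. -/
def IsCycleIn {V : Type*} (A : V → V → Prop) (q : ℕ) (c : ZMod q → V) : Prop :=
  2 ≤ q ∧ Function.Injective c ∧ ∀ i : ZMod q, A (c i) (c (i + 1))

/-- The digraph `D'` obtained from `A` by deleting all arcs of the cycle `c`. -/
def DelCycle {V : Type*} (A : V → V → Prop) (q : ℕ) (c : ZMod q → V) : V → V → Prop :=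
  fun x y => A x y ∧ ¬ ∃ i : ZMod q, x = c i ∧ y = c (i + 1)

/-- Mutual reachability of two vertices. -/
def MutReach {V : Type*} (A : V → V → Prop) (u v : V) : Prop :=
  Relation.ReflTransGen A u v ∧ Relation.ReflTransGen A v u

/-- `S` is (the vertex set of) a strong component of the digraph `A`. -/
def IsSC {V : Type*} (A : V → V → Prop) (S : Set V) : Prop :=
  ∃ v : V, S = {u | MutReach A v u}

/-- Indegree of `v`. -/
noncomputable def indeg {V : Type*} (A : V → V → Prop) (v : V) : ℕ := {u | A u v}.ncard

/-- Outdegree of `v`. -/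
noncomputable def outdeg {V : Type*} (A : V → V → Prop) (v : V) : ℕ := {u | A v u}.ncard

/-- A vertex is linear if its indegree and outdegree both equal 1. -/
def IsLinear {V : Type*} (A : V → V → Prop) (v : V) : Prop :=
  indeg A v = 1 ∧ outdeg A v = 1

/-- A vertex `v` is a cut point if deleting `v` (and its incident arcs) leaves a
digraph whose underlying graph is disconnected. -/
def IsCutPoint {V : Type*} (A : V → V → Prop) (v : V) : Prop :=
  ∃ x y : V, x ≠ v ∧ y ≠ v ∧
    ¬ Relation.ReflTransGen (fun a b => a ≠ v ∧ b ≠ v ∧ (A a b ∨ A b a)) x y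

/-- Adjacency in the condensation (Hasse diagram) of the digraph `A`:
two distinct strong components with an arc from the first to the second. -/
def HAdj {V : Type*} (A : V → V → Prop) (S T : Set V) : Prop :=
  IsSC A S ∧ IsSC A T ∧ S ≠ T ∧ ∃ u ∈ S, ∃ v ∈ T, A u v

noncomputable def HIndeg {V : Type*} (A : V → V → Prop) (S : Set V) : ℕ := {T : Set V | HAdj A T S}.ncard
noncomputable def HOutdeg {V : Type*} (A : V → V → Prop) (S : Set V) : ℕ := {T : Set V | HAdj A S T}.ncard

/-- A vertex of the Hasse diagram is linear if its indegree and outdegree there equal 1. -/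
def HLinear {V : Type*} (A : V → V → Prop) (S : Set V) : Prop :=
  HIndeg A S = 1 ∧ HOutdeg A S = 1

/-- Four elements of `ZMod q` appear in this cyclic order (all distinct). -/
def CyclicOrder4 {q : ℕ} (a b c d : ZMod q) : Prop :=
  0 < (b - a).val ∧ (b - a).val < (c - a).val ∧ (c - a).val < (d - a).val

open Relation

theorem aux_mono {V : Type*} {r p : V → V → Prop} {a b : V} (h : ReflTransGen r a b)
    (hrp : ∀ x y, r x y → p x y) : ReflTransGen p a b := by
  induction h with
  | refl => exact .refl
  | tail _ h ih => exact ih.tail (hrp _ _ h)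

theorem aux_reachK {V : Type*} (A D B : V → V → Prop) (K S : Set V)
    (hA : ∀ u v, ReflTransGen A u v) (hK : K.Nonempty)
    (hD : ∀ x y, A x y → (x ∉ K ∨ y ∉ K) → D x y)
    (hB : ∀ x y, A x y → (x ∉ S ∨ y ∉ S) → B x y)
    (hBA : ∀ x y, B x y → A x y)
    (hcl : ∀ z y s, z ∈ S → s ∈ S → D z y → ReflTransGen D y s → y ∈ S)
    (hQ : ∀ u v, ReflTransGen (fun x y => B x y ∨ ((x ∉ S ∨ x ∈ K) ∧ (y ∉ S ∨ y ∈ K))) u v)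
    (x : V) : ∃ k ∈ K, ReflTransGen B x k := by
  obtain ⟨k0, hk0⟩ := hK
  have ha : ∀ x, x ∉ S → (∃ k ∈ K, ReflTransGen B x k) ∨
      (∃ s ∈ S, ReflTransGen B x s ∧ ReflTransGen D x s) := by
    intro x
    induction hA x k0 using ReflTransGen.head_induction_on with
    | refl => intro _; exact Or.inl ⟨k0, hk0, .refl⟩
    | head h _ ih =>
      rename_i x y _
      intro hx
      by_cases hxK : x ∈ K
      · exact Or.inl ⟨x, hxK, .refl⟩
      have h1 : B x y := hB _ _ h (Or.inl hx)
      have h2 : D x y := hD _ _ h (Or.inl hxK)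
      by_cases hy : y ∈ S
      · exact Or.inr ⟨y, hy, .single h1, .single h2⟩
      rcases ih hy with ⟨k, hk, hr⟩ | ⟨s, hs, hr, hr'⟩
      · exact Or.inl ⟨k, hk, .head h1 hr⟩
      · exact Or.inr ⟨s, hs, .head h1 hr, .head h2 hr'⟩
  have hb : ∀ x, x ∈ S → ∃ k ∈ K, ReflTransGen B x k := by
    intro x
    induction hQ x k0 using ReflTransGen.head_induction_on with
    | refl => intro _; exact ⟨k0, hk0, .refl⟩
    | head h _ ih =>
      rename_i x y _
      intro hx
      by_cases hxK : x ∈ K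
      · exact ⟨x, hxK, .refl⟩
      have h1 : B x y := by
        rcases h with h | ⟨h | h, _⟩
        · exact h
        · exact absurd hx h
        · exact absurd h hxK
      by_cases hy : y ∈ S
      · obtain ⟨k, hk, hr⟩ := ih hy
        exact ⟨k, hk, .head h1 hr⟩
      by_cases hyK : y ∈ K
      · exact ⟨y, hyK, .single h1⟩
      have h2 : D x y := hD _ _ (hBA _ _ h1) (Or.inl hxK)
      rcases ha y hy with ⟨k, hk, hr⟩ | ⟨s, hs, hr, hr'⟩
      · exact ⟨k, hk, .head h1 hr⟩
      · exact absurd (hcl _ _ _ hx hs h2 hr') hy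
  by_cases hx : x ∈ S
  · exact hb x hx
  · rcases ha x hx with h | ⟨s, hs, hr, _⟩
    · exact h
    · obtain ⟨k, hk, hr'⟩ := hb s hs
      exact ⟨k, hk, hr.trans hr'⟩

theorem aux_walk {V : Type*} (E : V → V → Prop) {x y : V} (h : ReflTransGen E x y) :
    ∃ (n : ℕ) (p : ℕ → V), p 0 = x ∧ p n = y ∧ ∀ i < n, E (p i) (p (i + 1)) := by
  induction h using ReflTransGen.head_induction_on with
  | refl => exact ⟨0, fun _ => y, rfl, rfl, by simp⟩
  | head h _ ih =>
    rename_i x z _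
    obtain ⟨n, p, h0, hn, hp⟩ := ih
    refine ⟨n + 1, fun i => if i = 0 then x else p (i - 1), by simp, by simp [hn], ?_⟩
    intro i hi
    rcases i with _ | i
    · simpa [h0] using h
    · simpa using hp i (by omega)

/-- Ears: a walk leaving `X`, coming back to `X`, with distinct inner vertices outside `X`. -/
theorem aux_ear {V : Type*} (E : V → V → Prop) (X : Set V) (u x v : V)
    (hu : u ∈ X) (hx : x ∉ X) (hv : v ∈ X) (hux : E u x) (hxv : ReflTransGen E x v) :
    ∃ (n : ℕ) (p : ℕ → V), 2 ≤ n ∧ p 0 ∈ X ∧ p n ∈ X ∧ (∀ i < n, E (p i) (p (i + 1))) ∧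
      (∀ i, 1 ≤ i → i < n → p i ∉ X) ∧
      (∀ i j, 1 ≤ i → i < n → 1 ≤ j → j < n → p i = p j → i = j) := by
  classical
  let P : ℕ → Prop := fun n => ∃ p : ℕ → V, 2 ≤ n ∧ p 0 ∈ X ∧ p 1 ∉ X ∧ p n ∈ X ∧
    (∀ i < n, E (p i) (p (i + 1)))
  have hex : ∃ n, P n := by
    obtain ⟨n, p, h0, hn, hp⟩ := aux_walk E hxv
    refine ⟨n + 1, fun i => if i = 0 then u else p (i - 1), ?_, by simpa, by simpa [h0], 
      by simpa [hn], ?_⟩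
    · rcases n with _ | n
      · rw [← hn, h0] at hv; exact absurd hv hx
      · omega
    · intro i hi
      rcases i with _ | i
      · simpa [h0] using hux
      · simpa using hp i (by omega)
  obtain ⟨p, h2, h0, h1, hn, hp⟩ := Nat.find_spec hex
  have hmin : ∀ m, P m → Nat.find hex ≤ m := fun m hm => Nat.find_min' hex hm
  generalize Nat.find hex = n at *
  have hinj : ∀ i j, 1 ≤ i → j < n → i < j → p i ≠ p j := by
    intro i j hi hj hij he
    have := hmin (n - (j - i)) ⟨fun m => if m ≤ i then p m else p (m + (j - i)), by omega, by simpa,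
      by simpa [hi], ?_, ?_⟩
    · omega
    · dsimp only
      rw [if_neg (by omega)]
      rwa [show n - (j - i) + (j - i) = n by omega]
    · intro m hm
      dsimp only
      rcases lt_trichotomy m i with h | h | h
      · rw [if_pos (by omega), if_pos (by omega)]; exact hp m (by omega)
      · subst h
        simp only [le_refl, if_true]
        rw [if_neg (by omega), he, show m + 1 + (j - m) = j + 1 by omega]
        exact hp j hj
      · rw [if_neg (by omega), if_neg (by omega), show m + 1 + (j - i) = m + (j - i) + 1 by omega]
        exact hp _ (by omega)
  refine ⟨n, p, h2, h0, hn, hp, ?_, ?_⟩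
  · intro i hi hin hX
    have : i ≠ 1 := by rintro rfl; exact h1 hX
    have := hmin i ⟨p, by omega, h0, h1, hX, fun m hm => hp m (by omega)⟩
    omega
  · intro i j hi hin hj hjn he
    rcases lt_trichotomy i j with h | h | h
    · exact absurd he (hinj i j hi hjn h)
    · exact h
    · exact absurd he.symm (hinj j i hj hin h)

theorem aux_seg {V : Type*} (Q : V → V → Prop) (p : ℕ → V) (i j : ℕ) (hij : i ≤ j)
    (h : ∀ m, i ≤ m → m < j → Q (p m) (p (m + 1))) : ReflTransGen Q (p i) (p j) := by
  induction j, hij using Nat.le_induction with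
  | base => exact .refl
  | succ j hij ih =>
    exact (ih fun m h1 h2 => h m h1 (by omega)).tail (h j hij (by omega))

theorem aux_cross {V : Type*} (E : V → V → Prop) (X : Set V) {u y : V}
    (h : ReflTransGen E u y) (hu : u ∈ X) (hy : y ∉ X) : ∃ a b, a ∈ X ∧ b ∉ X ∧ E a b := by
  induction h with
  | refl => exact absurd hu hy
  | tail _ h ih =>
    rename_i b c _
    by_cases hb : b ∈ X
    · exact ⟨b, c, hb, hy, h⟩
    · exact ih hb

theorem aux_first {V : Type*} (E : V → V → Prop) {u y : V}
    (h : ReflTransGen E u y) (hne : u ≠ y) : ∃ b, E u b := by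
  rcases ReflTransGen.cases_head h with h | ⟨b, h, _⟩
  · exact absurd h hne
  · exact ⟨b, h⟩

theorem aux_comb {V : Type*} [Fintype V] (A : V → V → Prop) (W S : Set V)
    (hWS : ∀ x, x ∉ S → x ∈ W) (hWne : W.Nonempty) (hWu : ∃ x, x ∉ W)
    (hS2 : ∀ x ∈ S, ∃ y ∈ S, x ≠ y)
    (hA : ∀ u v, ReflTransGen A u v)
    (hH : ∀ u v, u ∈ S → v ∈ S → ReflTransGen (fun x y => A x y ∧ x ∈ S ∧ y ∈ S) u v)
    (hmin : ∀ a b, a ∈ S → b ∈ S → A a b →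
      ¬ ∀ u v, ReflTransGen (fun x y => (A x y ∧ ¬(x = a ∧ y = b)) ∨ (x ∈ W ∧ y ∈ W)) u v) :
    ∃ v ∈ S, IsLinear A v := by
  classical
  let R : V → V → Prop := fun x y => A x y ∨ (x ∈ W ∧ y ∈ W)
  let Good : Set V → Prop := fun X => W ⊆ X ∧ X ≠ Set.univ ∧
    ∀ x y, x ∈ X → y ∈ X → ReflTransGen (fun x y => R x y ∧ x ∈ X ∧ y ∈ X) x y
  have hGW : Good W := by
    refine ⟨subset_rfl, ?_, ?_⟩
    · obtain ⟨x, hx⟩ := hWu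
      rintro rfl
      exact hx trivial
    · intro x y hx hy
      exact .single ⟨Or.inr ⟨hx, hy⟩, hx, hy⟩
  obtain ⟨X, hXG, hXmax⟩ : ∃ X, Good X ∧ ∀ Y, Good Y → X ⊆ Y → Y ⊆ X := by
    obtain ⟨X, hX⟩ := (Set.toFinite {X | Good X}).exists_maximal ⟨W, hGW⟩
    exact ⟨X, hX.1, fun Y hY h => hX.2 hY h⟩
  obtain ⟨hWX, hXu, hXs⟩ := hXG
  obtain ⟨y0, hy0⟩ : ∃ y, y ∉ X := by
    by_contra h
    push Not at h
    exact hXu (Set.eq_univ_of_forall h)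
  have hXS : ∀ x, x ∉ X → x ∈ S := fun x hx => by
    by_contra h
    exact hx (hWX (hWS x h))
  obtain ⟨w0, hw0⟩ := hWne
  -- an ear covers everything
  have hcov : ∀ (n : ℕ) (p : ℕ → V), 2 ≤ n → p 0 ∈ X → p n ∈ X →
      (∀ i < n, R (p i) (p (i + 1))) → (∀ i, 1 ≤ i → i < n → p i ∉ X) →
      ∀ x, x ∉ X → ∃ i, 1 ≤ i ∧ i < n ∧ p i = x := by
    intro n p h2 h0 hn hp hpX x hx
    let Y : Set V := X ∪ {x | ∃ i, 1 ≤ i ∧ i < n ∧ p i = x}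
    have hpY : ∀ i ≤ n, p i ∈ Y := by
      intro i hi
      rcases Nat.eq_zero_or_pos i with rfl | h
      · exact Or.inl h0
      rcases hi.eq_or_lt with rfl | h'
      · exact Or.inl hn
      · exact Or.inr ⟨i, h, h', rfl⟩
    have hY : Y = Set.univ := by
      by_contra hYu
      have : Good Y := by
        refine ⟨fun x hx => Or.inl (hWX hx), hYu, ?_⟩
        have hX' : ∀ x y, x ∈ X → y ∈ X → ReflTransGen (fun x y => R x y ∧ x ∈ Y ∧ y ∈ Y) x y :=
          fun x y hx hy => aux_mono (hXs x y hx hy)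
            fun a b h => ⟨h.1, Or.inl h.2.1, Or.inl h.2.2⟩
        have hseg : ∀ i j, i ≤ j → j ≤ n →
            ReflTransGen (fun x y => R x y ∧ x ∈ Y ∧ y ∈ Y) (p i) (p j) := by
          intro i j hij hj
          exact aux_seg _ p i j hij fun m h1 h2 =>
            ⟨hp m (by omega), hpY m (by omega), hpY (m + 1) (by omega)⟩
        have hto : ∀ x ∈ Y, ReflTransGen (fun x y => R x y ∧ x ∈ Y ∧ y ∈ Y) x (p 0) := by
          rintro x (hx | ⟨i, h1, h2, rfl⟩)
          · exact hX' _ _ hx h0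
          · exact (hseg i n (by omega) le_rfl).trans (hX' _ _ hn h0)
        have hfrom : ∀ x ∈ Y, ReflTransGen (fun x y => R x y ∧ x ∈ Y ∧ y ∈ Y) (p 0) x := by
          rintro x (hx | ⟨i, h1, h2, rfl⟩)
          · exact hX' _ _ h0 hx
          · exact hseg 0 i (by omega) (by omega)
        exact fun x y hx hy => (hto x hx).trans (hfrom y hy)
      have := hXmax Y this Set.subset_union_left
      exact hpX 1 le_rfl (by omega) (this (hpY 1 (by omega)))
    have hxY : x ∈ Y := by rw [hY]; trivial
    rcases hxY with h | h
    · exact absurd h hx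
    · exact h
  -- redundancy
  have hred : ∀ a b, a ∈ S → b ∈ S → A a b → (a ∉ X ∨ b ∉ X) →
      (∀ x, x ∉ X → ∃ z ∈ X, ReflTransGen
        (fun x y => (A x y ∧ ¬(x = a ∧ y = b)) ∨ (x ∈ W ∧ y ∈ W)) x z) →
      (∀ x, x ∉ X → ∃ z ∈ X, ReflTransGen
        (fun x y => (A x y ∧ ¬(x = a ∧ y = b)) ∨ (x ∈ W ∧ y ∈ W)) z x) → False := by
    intro a b ha hb hab habX hto hfrom
    apply hmin a b ha hb hab
    have hX' : ∀ x y, x ∈ X → y ∈ X → ReflTransGen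
        (fun x y => (A x y ∧ ¬(x = a ∧ y = b)) ∨ (x ∈ W ∧ y ∈ W)) x y := by
      intro x y hx hy
      refine aux_mono (hXs x y hx hy) ?_
      rintro s t ⟨h | h, hs, ht⟩
      · refine Or.inl ⟨h, ?_⟩
        rintro ⟨rfl, rfl⟩
        rcases habX with h | h <;> contradiction
      · exact Or.inr h
    have hto' : ∀ x, ∃ z ∈ X, ReflTransGen
        (fun x y => (A x y ∧ ¬(x = a ∧ y = b)) ∨ (x ∈ W ∧ y ∈ W)) x z := by
      intro x
      by_cases hx : x ∈ X
      · exact ⟨x, hx, .refl⟩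
      · exact hto x hx
    have hfrom' : ∀ x, ∃ z ∈ X, ReflTransGen
        (fun x y => (A x y ∧ ¬(x = a ∧ y = b)) ∨ (x ∈ W ∧ y ∈ W)) z x := by
      intro x
      by_cases hx : x ∈ X
      · exact ⟨x, hx, .refl⟩
      · exact hfrom x hx
    intro u v
    obtain ⟨z, hz, h1⟩ := hto' u
    obtain ⟨z', hz', h2⟩ := hfrom' v
    exact h1.trans ((hX' z z' hz hz').trans h2)
  -- arcs off the ear are redundant
  have hoff : ∀ (n : ℕ) (p : ℕ → V), 2 ≤ n → p 0 ∈ X → p n ∈ X →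
      (∀ i < n, R (p i) (p (i + 1))) → (∀ i, 1 ≤ i → i < n → p i ∉ X) →
      ∀ a b, a ∈ S → b ∈ S → A a b → (a ∉ X ∨ b ∉ X) →
      ∃ i < n, p i = a ∧ p (i + 1) = b := by
    intro n p h2 h0 hn hp hpX a b ha hb hab habX
    by_contra hne
    push Not at hne
    have hp' : ∀ i < n, (A (p i) (p (i + 1)) ∧ ¬(p i = a ∧ p (i + 1) = b)) ∨
        (p i ∈ W ∧ p (i + 1) ∈ W) := by
      intro i hi
      rcases hp i hi with h | h
      · exact Or.inl ⟨h, fun h' => hne i hi h'.1 h'.2⟩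
      · exact Or.inr h
    refine hred a b ha hb hab habX ?_ ?_
    · intro x hx
      obtain ⟨i, h1, hi, rfl⟩ := hcov n p h2 h0 hn hp hpX x hx
      exact ⟨p n, hn, aux_seg _ p i n hi.le fun m _ h => hp' m h⟩
    · intro x hx
      obtain ⟨i, h1, hi, rfl⟩ := hcov n p h2 h0 hn hp hpX x hx
      exact ⟨p 0, h0, aux_seg _ p 0 i (by omega) fun m _ h => hp' m (by omega)⟩
  by_cases hXS0 : ∃ r, r ∈ X ∧ r ∈ S
  · obtain ⟨r, hrX, hrS⟩ := hXS0
    obtain ⟨u, x, hu, hx, hux⟩ := aux_cross _ X (hH r y0 hrS (hXS y0 hy0)) hrX hy0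
    obtain ⟨n, p, h2, h0, hn, hpH, hpX, hinj⟩ :=
      aux_ear _ X u x r hu hx hrX hux (hH x r (hXS x hx) hrS)
    have hp : ∀ i < n, R (p i) (p (i + 1)) := fun i hi => Or.inl (hpH i hi).1
    have hoff' := hoff n p h2 h0 hn hp hpX
    have hcov' := hcov n p h2 h0 hn hp hpX
    by_contra hlin
    push Not at hlin
    -- every inner vertex has an arc to or from the outside
    have hOI : ∀ i, 1 ≤ i → i < n → (∃ y, y ∉ S ∧ A (p i) y) ∨ (∃ y, y ∉ S ∧ A y (p i)) := by
      intro i hi hin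
      by_contra hno
      push Not at hno
      obtain ⟨hno1, hno2⟩ := hno
      have hiX := hpX i hi hin
      have hiS := hXS _ hiX
      refine hlin (p i) hiS ⟨?_, ?_⟩
      · rw [indeg, Set.ncard_eq_one]
        refine ⟨p (i - 1), ?_⟩
        ext y
        simp only [Set.mem_setOf_eq, Set.mem_singleton_iff]
        constructor
        · intro hy
          have hyS : y ∈ S := by
            by_contra h
            exact hno2 y h hy
          obtain ⟨j, hj, rfl, hj2⟩ := hoff' y (p i) hyS hiS hy (Or.inr hiX)
          have : j + 1 ≠ n := by
            intro h
            rw [h] at hj2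
            exact hiX (hj2 ▸ hn)
          have := hinj (j + 1) i (by omega) (by omega) hi hin hj2
          rw [← this]; rfl
        · rintro rfl
          have := (hpH (i - 1) (by omega)).1
          rwa [Nat.sub_add_cancel hi] at this
      · rw [outdeg, Set.ncard_eq_one]
        refine ⟨p (i + 1), ?_⟩
        ext y
        simp only [Set.mem_setOf_eq, Set.mem_singleton_iff]
        constructor
        · intro hy
          have hyS : y ∈ S := by
            by_contra h
            exact hno1 y h hy
          obtain ⟨j, hj, hj2, rfl⟩ := hoff' (p i) y hiS hyS hy (Or.inl hiX)
          have : j ≠ 0 := by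
            intro h
            rw [h] at hj2
            exact hiX (hj2 ▸ h0)
          have := hinj j i (by omega) (by omega) hi hin hj2
          rw [this]
        · rintro rfl
          exact (hpH i hin).1
    -- no ear arc can be bypassed
    have hby : ∀ j < n, (j = 0 ∨ ∃ y, y ∉ S ∧ A (p j) y) →
        (j + 1 = n ∨ ∃ y, y ∉ S ∧ A y (p (j + 1))) → False := by
      intro j hj hO hI
      have hjS := (hpH j hj).2
      have hp' : ∀ m < n, m ≠ j → (A (p m) (p (m + 1)) ∧ ¬(p m = p j ∧ p (m + 1) = p (j + 1))) ∨
          (p m ∈ W ∧ p (m + 1) ∈ W) := by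
        intro m hm hmj
        refine Or.inl ⟨(hpH m hm).1, ?_⟩
        rintro ⟨h, -⟩
        rcases Nat.eq_zero_or_pos m with rfl | hm0
        · exact hpX j (by omega) hj (h ▸ h0)
        rcases Nat.eq_zero_or_pos j with rfl | hj0
        · exact hpX m (by omega) hm (h ▸ h0)
        exact hmj (hinj m j hm0 hm hj0 hj h)
      refine hred (p j) (p (j + 1)) hjS.1 hjS.2 (hpH j hj).1 ?_ ?_ ?_
      · rcases Nat.eq_zero_or_pos j with rfl | hj0
        · exact Or.inr (hpX 1 le_rfl (by omega))
        · exact Or.inl (hpX j hj0 hj)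
      · intro x hx
        obtain ⟨i, h1, hi, rfl⟩ := hcov' x hx
        by_cases hij : i ≤ j
        · rcases hO with rfl | ⟨y, hyS, hy⟩
          · omega
          refine ⟨y, hWX (hWS y hyS), ReflTransGen.tail (aux_seg _ p i j hij fun m _ h =>
            hp' m (by omega) (by omega)) (Or.inl ⟨hy, ?_⟩)⟩
          rintro ⟨-, h⟩
          exact hyS (h ▸ hjS.2)
        · exact ⟨p n, hn, aux_seg _ p i n (by omega) fun m _ h => hp' m (by omega) (by omega)⟩
      · intro x hx
        obtain ⟨i, h1, hi, rfl⟩ := hcov' x hx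
        by_cases hij : i ≤ j
        · exact ⟨p 0, h0, aux_seg _ p 0 i (by omega) fun m _ h => hp' m (by omega) (by omega)⟩
        · rcases hI with h | ⟨y, hyS, hy⟩
          · omega
          refine ⟨y, hWX (hWS y hyS), ReflTransGen.head (Or.inl ⟨hy, ?_⟩)
            (aux_seg _ p (j + 1) i (by omega) fun m _ h => hp' m (by omega) (by omega))⟩
          rintro ⟨h, -⟩
          exact hyS (h ▸ hjS.1)
    have hall : ∀ i, 1 ≤ i → i < n → ∃ y, y ∉ S ∧ A (p i) y := by
      intro i hi
      induction i, hi using Nat.le_induction with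
      | base =>
        intro h
        rcases hOI 1 le_rfl h with h' | h'
        · exact h'
        · exact (hby 0 (by omega) (Or.inl rfl) (Or.inr h')).elim
      | succ i hi ih =>
        intro h
        rcases hOI (i + 1) (by omega) h with h' | h'
        · exact h'
        · exact (hby i (by omega) (Or.inr (ih (by omega))) (Or.inr h')).elim
    exact hby (n - 1) (by omega) (Or.inr (hall (n - 1) (by omega) (by omega)))
      (Or.inl (by omega))
  · exfalso
    push Not at hXS0
    have hRs : ∀ u v, ReflTransGen R u v := fun u v => aux_mono (hA u v) fun _ _ h => Or.inl h
    have hw0X := hWX hw0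
    obtain ⟨u, x, hu, hx, hux⟩ := aux_cross R X (hRs w0 y0) hw0X hy0
    obtain ⟨n, p, h2, h0, hn, hp, hpX, hinj⟩ :=
      aux_ear R X u x w0 hu hx hw0X hux (hRs x w0)
    have hlX := hpX (n - 1) (by omega) (by omega)
    have hlS := hXS _ hlX
    obtain ⟨z, hz, hne⟩ := hS2 _ hlS
    obtain ⟨b, hb, -, hbS⟩ := aux_first _ (hH _ z hlS hz) hne
    obtain ⟨i, hi, h1, h3⟩ := hoff n p h2 h0 hn hp hpX _ b hlS hbS hb (Or.inl hlX)
    have hi0 : i ≠ 0 := by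
      rintro rfl
      exact hlX (h1 ▸ h0)
    have := hinj i (n - 1) (by omega) hi (by omega) (by omega) h1
    subst this
    rw [Nat.sub_add_cancel (by omega)] at h3
    exact hXS0 b (h3 ▸ hn) hbS

theorem aux_cyc {V : Type*} (B : V → V → Prop) (q : ℕ) (hq : 2 ≤ q) (c : ZMod q → V)
    (h : ∀ i, B (c i) (c (i + 1))) (i j : ZMod q) : ReflTransGen B (c i) (c j) := by
  have : NeZero q := ⟨by omega⟩
  have key : ∀ n : ℕ, ReflTransGen B (c i) (c (i + n)) := by
    intro n
    induction n with
    | zero => simpa using ReflTransGen.refl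
    | succ n ih =>
      have := ih.tail (h _)
      rwa [add_assoc, ← Nat.cast_succ] at this
  have := key (j - i).val
  rwa [ZMod.natCast_zmod_val, add_sub_cancel] at this

/-- Every non-trivial strong component of `D'` containing at most one vertex
of `C_q` contains a vertex that is linear in `D`. -/
theorem stmt6 {V : Type*} [Fintype V] (A : V → V → Prop) (q : ℕ) (c : ZMod q → V)
    (hMSD : IsMSD A) (hc : IsCycleIn A q c) (S : Set V) (hS : IsSC (DelCycle A q c) S)
    (hnontrivial : 1 < S.ncard) (hone : (S ∩ Set.range c).ncard ≤ 1) :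
    ∃ v ∈ S, IsLinear A v := by
  obtain ⟨hq, hcinj, hcA⟩ := hc
  obtain ⟨hA, hAmin⟩ := hMSD
  obtain ⟨v0, rfl⟩ := hS
  have : Fact (1 < q) := ⟨by omega⟩
  set D := DelCycle A q c with hDdef
  set S : Set V := {u | MutReach D v0 u} with hSdef
  have hDA : ∀ x y, D x y → A x y := fun x y h => h.1
  have hsub : ∀ x y, x ∈ S → x ∈ Set.range c → y ∈ S → y ∈ Set.range c → x = y := by
    intro x y h1 h2 h3 h4
    exact (Set.ncard_le_one (Set.toFinite _)).1 hone x ⟨h1, h2⟩ y ⟨h3, h4⟩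
  have hcne : ∀ i, c i ≠ c (i + 1) := by
    intro i h
    have := hcinj h
    simp at this
  have hcl : ∀ z y s, z ∈ S → s ∈ S → ReflTransGen D z y → ReflTransGen D y s → y ∈ S :=
    fun z y s hz hs h1 h2 => ⟨hz.1.trans h1, h2.trans hs.2⟩
  have hnt := (Set.one_lt_ncard_iff (Set.toFinite S)).1 hnontrivial
  obtain ⟨s, t, hs, ht, hst⟩ := hnt
  refine aux_comb A {x | x ∉ S ∨ x ∈ Set.range c} S (fun x hx => Or.inl hx) ⟨c 0, Or.inr ⟨0, rfl⟩⟩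
    ?_ ?_ hA ?_ ?_
  · by_contra h
    push Not at h
    have hs' := (h s).resolve_left (fun h => h hs)
    have ht' := (h t).resolve_left (fun h => h ht)
    exact hst (hsub s t hs hs' ht ht')
  · intro x hx
    by_cases h : x = s
    · exact ⟨t, ht, by rw [h]; exact hst⟩
    · exact ⟨s, hs, h⟩
  · intro u v hu hv
    have huv : ReflTransGen D u v := hu.2.trans hv.1
    induction huv using ReflTransGen.head_induction_on with
    | refl => exact .refl
    | head h h' ih =>
      have hy := hcl _ _ _ hu hv (.single h) h'
      exact ReflTransGen.head ⟨hDA _ _ h, hu, hy⟩ (ih hy)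
  · intro a b ha hb hab hQ
    apply hAmin a b hab
    have hD : ∀ x y, A x y → (x ∉ Set.range c ∨ y ∉ Set.range c) → D x y := by
      intro x y h h'
      refine ⟨h, ?_⟩
      rintro ⟨i, rfl, rfl⟩
      rcases h' with h' | h' <;> exact h' ⟨_, rfl⟩
    have hB : ∀ x y, A x y → (x ∉ S ∨ y ∉ S) → A x y ∧ ¬(x = a ∧ y = b) := by
      intro x y h h'
      refine ⟨h, ?_⟩
      rintro ⟨rfl, rfl⟩
      rcases h' with h' | h' <;> contradiction
    have hto := aux_reachK A D (fun x y => A x y ∧ ¬(x = a ∧ y = b)) (Set.range c) S hA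
      ⟨c 0, 0, rfl⟩ hD hB (fun _ _ h => h.1)
      (fun z y s hz hs h1 h2 => hcl z y s hz hs (.single h1) h2) hQ
    have hfrom := aux_reachK (Function.swap A) (Function.swap D)
      (Function.swap fun x y => A x y ∧ ¬(x = a ∧ y = b)) (Set.range c) S
      (fun u v => reflTransGen_swap.2 (hA v u))
      ⟨c 0, 0, rfl⟩ (fun x y h h' => hD y x h h'.symm) (fun x y h h' => hB y x h h'.symm)
      (fun _ _ h => h.1)
      (fun z y s hz hs h1 h2 => hcl s y z hs hz (reflTransGen_swap.1 h2) (.single h1))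
      (fun u v => by
        have := reflTransGen_swap.2 (hQ v u)
        refine aux_mono this ?_
        rintro x y (h | ⟨h, h'⟩)
        · exact Or.inl h
        · exact Or.inr ⟨h', h⟩)
    have hcyc := aux_cyc (fun x y => A x y ∧ ¬(x = a ∧ y = b)) q hq c (by
      intro i
      refine ⟨hcA i, ?_⟩
      rintro ⟨rfl, rfl⟩
      exact hcne i (hsub _ _ ha ⟨_, rfl⟩ hb ⟨_, rfl⟩))
    intro u v
    obtain ⟨_, ⟨i, rfl⟩, h1⟩ := hto u
    obtain ⟨_, ⟨j, rfl⟩, h2⟩ := hfrom v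
    exact h1.trans ((hcyc i j).trans (reflTransGen_swap.1 h2))
end

section
/- Let D be a minimal strong digraph (MSD) and let C_q be a directed cycle of length q contained in D. Then the number α of linear vertices of D satisfies α ≥ ⌊(q+1)/2⌋. -/
open Relation

/-- The subdigraph induced on `S`. -/
def IndArc {V : Type*} (A : V → V → Prop) (S : Set V) : V → V → Prop :=
  fun x y => A x y ∧ x ∈ S ∧ y ∈ S

/-- The digraph with the arc `(a, b)` deleted. -/
def DelArc {V : Type*} (A : V → V → Prop) (a b : V) : V → V → Prop :=
  fun x y => A x y ∧ ¬(x = a ∧ y = b)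

lemma _root_.Relation.ReflTransGen.mono_rel {V : Type*} {A B : V → V → Prop} {u v : V}
    (hr : ReflTransGen A u v) (h : ∀ x y, A x y → B x y) : ReflTransGen B u v := by
  induction hr with
  | refl => exact .refl
  | tail _ hab ih => exact ih.tail (h _ _ hab)

lemma rtg_closed {V : Type*} {A : V → V → Prop} {S : Set V}
    (h : ∀ x y, x ∈ S → A x y → y ∈ S) {u v : V} (hu : u ∈ S)
    (hr : ReflTransGen A u v) : v ∈ S := by
  induction hr with
  | refl => exact hu
  | tail _ hab ih => exact h _ _ ih hab

/-- Last exit from `w`. -/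
lemma last_exit {V : Type*} {A : V → V → Prop} {w s : V} (hws : w ≠ s)
    (hr : ReflTransGen A w s) :
    ∃ y, A w y ∧ ReflTransGen (fun a b => A a b ∧ a ≠ w ∧ b ≠ w) y s := by
  have hno : ¬ ReflTransGen (fun a b => A a b ∧ a ≠ w ∧ b ≠ w) w s := by
    intro h
    rcases h.cases_head with h | ⟨z, hz, _⟩
    · exact hws h
    · exact hz.2.1 rfl
  have key : ∀ z, ReflTransGen A z s →
      ReflTransGen (fun a b => A a b ∧ a ≠ w ∧ b ≠ w) z s ∨
      ∃ y, A w y ∧ ReflTransGen (fun a b => A a b ∧ a ≠ w ∧ b ≠ w) y s := by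
    intro z hz
    induction hz using ReflTransGen.head_induction_on with
    | refl => exact Or.inl .refl
    | @head a b hab _ ih =>
      rcases ih with ih | ih
      · by_cases ha : a = w
        · subst ha
          exact Or.inr ⟨b, hab, ih⟩
        · have hb : b ≠ w := by
            rintro rfl
            exact hno ih
          exact Or.inl (.head ⟨hab, ha, hb⟩ ih)
      · exact Or.inr ih
  rcases key w hr with h | h
  · exact absurd h hno
  · exact h

lemma exists_linear_off {V : Type*} [Fintype V] {A : V → V → Prop} (hM : IsMSD A)
    (S0 : Set V) (s0 : V) (hs0 : s0 ∈ S0) (hne : S0 ≠ Set.univ)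
    (hst : ∀ u ∈ S0, ∀ v ∈ S0, ReflTransGen (IndArc A S0) u v) :
    ∃ v, v ∉ S0 ∧ IsLinear A v := by
  classical
  let P : Set (Set V) := {S | S0 ⊆ S ∧ S ≠ Set.univ ∧
    ∀ u ∈ S, ∀ v ∈ S, ReflTransGen (IndArc A S) u v}
  obtain ⟨S, hS⟩ := (Set.toFinite P).exists_maximal ⟨S0, subset_rfl, hne, hst⟩
  obtain ⟨⟨hS0, hSne, hSst⟩, hmax⟩ := hS
  have hleave : ∃ s w, s ∈ S ∧ w ∉ S ∧ A s w := by
    by_contra hcon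
    push Not at hcon
    apply hSne
    ext z
    simp only [Set.mem_univ, iff_true]
    refine rtg_closed (A := A) (fun x y hx hxy => ?_) (hS0 hs0) (hM.1 s0 z)
    by_contra hy
    exact hcon x y hx hy hxy
  obtain ⟨s, w, hs, hw, hsw⟩ := hleave
  have hws : w ≠ s := by
    rintro rfl
    exact hw hs
  obtain ⟨y, hwy, hys⟩ := last_exit hws (hM.1 w s)
  let A2 : V → V → Prop := fun a b =>
    A a b ∧ ((a ≠ w ∧ b ≠ w) ∨ (a = s ∧ b = w) ∨ (a = w ∧ b = y))
  have hA2w : ReflTransGen A2 s w := .single ⟨hsw, Or.inr (Or.inl ⟨rfl, rfl⟩)⟩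
  have hA2s : ReflTransGen A2 w s :=
    .head ⟨hwy, Or.inr (Or.inr ⟨rfl, rfl⟩)⟩
      (hys.mono_rel fun a b h => ⟨h.1, Or.inl h.2⟩)
  have hmono : ∀ a b, IndArc A S a b → A2 a b := by
    rintro a b ⟨h, ha, hb⟩
    refine ⟨h, Or.inl ⟨?_, ?_⟩⟩
    · rintro rfl; exact hw ha
    · rintro rfl; exact hw hb
  let T : Set V := {z | MutReach A2 s z}
  have hST : S ⊆ T := fun z hz =>
    ⟨(hSst s hs z hz).mono_rel hmono, (hSst z hz s hs).mono_rel hmono⟩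
  have hTu : T = Set.univ := by
    by_contra hT
    have hTP : T ∈ P := by
      refine ⟨hS0.trans hST, hT, fun u hu v hv => ?_⟩
      have hkey : ∀ z, ReflTransGen A2 z v → z ∈ T → ReflTransGen (IndArc A T) z v := by
        intro z hz
        induction hz using ReflTransGen.head_induction_on with
        | refl => exact fun _ => .refl
        | @head a b hab hbv ih =>
          intro ha
          have hb : b ∈ T := ⟨ha.1.tail hab, hbv.trans hv.2⟩
          exact .head ⟨hab.1, ha, hb⟩ (ih hb)
      exact hkey u (hu.2.trans hv.1) hu
    exact hw (hmax hTP hST (show w ∈ T from ⟨hA2w, hA2s⟩))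
  have hstr : StronglyConnected A2 := by
    intro u v
    have hu : u ∈ T := hTu ▸ Set.mem_univ u
    have hv : v ∈ T := hTu ▸ Set.mem_univ v
    exact hu.2.trans hv.1
  have hall : ∀ a b, A a b → A2 a b := by
    intro a b hab
    by_contra hn
    refine hM.2 a b hab fun u v => (hstr u v).mono_rel ?_
    intro x z hxz
    refine ⟨hxz.1, ?_⟩
    rintro ⟨rfl, rfl⟩
    exact hn hxz
  have hyw : y ≠ w := by
    rintro rfl
    rcases hys.cases_head with h | ⟨z, hz, _⟩
    · exact hws h
    · exact hz.2.1 rfl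
  refine ⟨w, fun h => hw (hS0 h), ?_, ?_⟩
  · unfold indeg
    rw [Set.ncard_eq_one]
    refine ⟨s, ?_⟩
    ext z
    simp only [Set.mem_setOf_eq, Set.mem_singleton_iff]
    constructor
    · intro h
      rcases (hall _ _ h).2 with h | h | h
      · exact absurd rfl h.2
      · exact h.1
      · exact absurd h.2.symm hyw
    · rintro rfl; exact hsw
  · unfold outdeg
    rw [Set.ncard_eq_one]
    refine ⟨y, ?_⟩
    ext z
    simp only [Set.mem_setOf_eq, Set.mem_singleton_iff]
    constructor
    · intro h
      rcases (hall _ _ h).2 with h | h | h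
      · exact absurd rfl h.1
      · exact absurd h.1 hws
      · exact h.2
    · rintro rfl; exact hwy

lemma card_le_off {V : Type*} [Fintype V] {A : V → V → Prop} (hM : IsMSD A)
    (K : Set V) (B : V → V → Prop) (hBA : ∀ x y, B x y → A x y)
    (hB : ∀ u ∈ K, ∀ v ∈ K, ReflTransGen B u v)
    (X : Set V) (hX : X ⊆ K) (hf : ∀ x ∈ X, ∃ y, A x y ∧ ¬ B x y) :
    X.ncard ≤ {v | IsLinear A v ∧ v ∉ K}.ncard := by
  classical
  choose! f hf using hf
  let S : V → Set V := fun x => {z | ∃ k ∈ K, ReflTransGen (DelArc A x (f x)) k z}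
  have hBd : ∀ x ∈ X, ∀ a b, B a b → DelArc A x (f x) a b := by
    intro x hx a b hab
    refine ⟨hBA _ _ hab, ?_⟩
    rintro ⟨rfl, rfl⟩
    exact (hf _ hx).2 hab
  have hKS : ∀ x, K ⊆ S x := fun x k hk => ⟨k, hk, .refl⟩
  have hstep : ∀ x a b, a ∈ S x → A a b → ¬(a = x ∧ b = f x) → b ∈ S x := by
    rintro x a b ⟨k, hk, hka⟩ hab hn
    exact ⟨k, hk, hka.tail ⟨hab, hn⟩⟩
  have hfx : ∀ x ∈ X, f x ∉ S x := by
    rintro x hx ⟨k, hk, hkw⟩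
    have hxw : ReflTransGen (DelArc A x (f x)) x (f x) :=
      ((hB x (hX hx) k hk).mono_rel (hBd x hx)).trans hkw
    refine hM.2 x (f x) (hf x hx).1 fun u v => ?_
    have huv := hM.1 u v
    induction huv with
    | refl => exact .refl
    | @tail a b _ hab ih =>
      by_cases h : a = x ∧ b = f x
      · obtain ⟨rfl, rfl⟩ := h
        exact ih.trans hxw
      · exact ih.tail ⟨hab, h⟩
  have hstr : ∀ x ∈ X, ∀ u ∈ S x, ∀ v ∈ S x, ReflTransGen (IndArc A (S x)) u v := by
    intro x hx u hu v hv
    have h1 : ∀ z, ReflTransGen A z x → z ∈ S x → ReflTransGen (IndArc A (S x)) z x := by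
      intro z hz
      induction hz using ReflTransGen.head_induction_on with
      | refl => exact fun _ => .refl
      | @head a b hab _ ih =>
        intro ha
        by_cases hax : a = x
        · subst hax; exact .refl
        · have hb := hstep x a b ha hab fun h => hax h.1
          exact .head ⟨hab, ha, hb⟩ (ih hb)
    obtain ⟨k, hk, hkv⟩ := hv
    have h2 : ReflTransGen (DelArc A x (f x)) x v :=
      ((hB x (hX hx) k hk).mono_rel (hBd x hx)).trans hkv
    have h3 : ReflTransGen (IndArc A (S x)) x v := by
      have : ∀ z, ReflTransGen (DelArc A x (f x)) x z →
          ReflTransGen (IndArc A (S x)) x z := by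
        intro z hz
        induction hz with
        | refl => exact .refl
        | @tail a b hxa hab ih =>
          exact ih.tail ⟨hab.1, ⟨x, hX hx, hxa⟩, ⟨x, hX hx, hxa.tail hab⟩⟩
      exact this v h2
    exact (h1 u (hM.1 u x) hu).trans h3
  have hlin : ∀ x ∈ X, ∃ v, v ∉ S x ∧ IsLinear A v := by
    intro x hx
    refine exists_linear_off hM (S x) x (hKS x (hX hx)) ?_ (hstr x hx)
    intro h
    exact hfx x hx (h ▸ Set.mem_univ _)
  choose! g hg using hlin
  refine Set.ncard_le_ncard_of_injOn g ?_ ?_ (Set.toFinite _)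
  · intro x hx
    exact ⟨(hg x hx).2, fun h => (hg x hx).1 (hKS x h)⟩
  · intro x hx x' hx' hgg
    by_contra hne
    have hcl : g x ∈ S x ∪ S x' := by
      refine rtg_closed (A := A) ?_ (Or.inl (hKS x (hX hx))) (hM.1 x (g x))
      intro a b hab h
      by_cases h1 : a = x ∧ b = f x
      · exact Or.inr (hstep x' a b (h1.1 ▸ hKS x' (hX hx)) h
          fun h2 => hne (h1.1.symm.trans h2.1))
      · by_cases h2 : a = x' ∧ b = f x'
        · exact Or.inl (hstep x a b (h2.1 ▸ hKS x (hX hx')) h h1)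
        · rcases hab with ha | ha
          · exact Or.inl (hstep x a b ha h h1)
          · exact Or.inr (hstep x' a b ha h h2)
    rcases hcl with h | h
    · exact (hg x hx).1 h
    · exact (hg x' hx').1 (hgg ▸ h)

lemma sc_swap {V : Type*} {A : V → V → Prop} :
    StronglyConnected (Function.swap A) ↔ StronglyConnected A := by
  unfold StronglyConnected
  constructor
  · intro h u v
    exact reflTransGen_swap.1 (h v u)
  · intro h u v
    exact reflTransGen_swap.2 (h v u)

lemma msd_swap {V : Type*} {A : V → V → Prop} (hM : IsMSD A) : IsMSD (Function.swap A) := by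
  refine ⟨sc_swap.2 hM.1, fun a b hab h => hM.2 b a hab (sc_swap.1 ?_)⟩
  intro u v
  refine (h u v).mono_rel ?_
  rintro x y ⟨h1, h2⟩
  exact ⟨h1, fun h3 => h2 ⟨h3.2, h3.1⟩⟩

/-- An MSD containing a directed cycle of length `q` has at least
`⌊(q+1)/2⌋` linear vertices. -/
theorem stmt12 {V : Type*} [Fintype V] (A : V → V → Prop) (q : ℕ) (c : ZMod q → V)
    (hMSD : IsMSD A) (hc : IsCycleIn A q c) :
    (q + 1) / 2 ≤ {v : V | IsLinear A v}.ncard := by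
  classical
  obtain ⟨hq, hinj, hcyc⟩ := hc
  haveI : NeZero q := ⟨by omega⟩
  let K : Set V := Set.range c
  let B : V → V → Prop := fun x y => ∃ i : ZMod q, x = c i ∧ y = c (i + 1)
  have hBA : ∀ x y, B x y → A x y := by
    rintro x y ⟨i, rfl, rfl⟩
    exact hcyc i
  have hBn : ∀ (i : ZMod q) (n : ℕ), ReflTransGen B (c i) (c (i + n)) := by
    intro i n
    induction n with
    | zero => simpa using ReflTransGen.refl
    | succ n ih =>
      refine ih.tail ⟨i + n, rfl, ?_⟩
      push_cast
      rw [add_assoc]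
  have hB : ∀ u ∈ K, ∀ v ∈ K, ReflTransGen B u v := by
    rintro _ ⟨i, rfl⟩ _ ⟨j, rfl⟩
    have h := hBn i (j - i).val
    rwa [ZMod.natCast_zmod_val, add_sub_cancel] at h
  let X : Set V := {v | v ∈ K ∧ outdeg A v ≠ 1}
  let Y : Set V := {v | v ∈ K ∧ indeg A v ≠ 1}
  let L : Set V := {v | IsLinear A v ∧ v ∉ K}
  have hXL : X.ncard ≤ L.ncard := by
    refine card_le_off hMSD K B hBA hB X (fun x hx => hx.1) ?_
    rintro x ⟨⟨i, rfl⟩, hx⟩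
    by_contra hcon
    push Not at hcon
    apply hx
    unfold outdeg
    rw [Set.ncard_eq_one]
    refine ⟨c (i + 1), ?_⟩
    ext z
    simp only [Set.mem_setOf_eq, Set.mem_singleton_iff]
    constructor
    · intro h
      obtain ⟨j, h1, h2⟩ := hcon z h
      rw [h2, hinj h1]
    · rintro rfl; exact hcyc i
  have hYL : Y.ncard ≤ L.ncard := by
    have h := card_le_off (msd_swap hMSD) K (Function.swap B) (fun x y h => hBA y x h)
      (fun u hu v hv => reflTransGen_swap.2 (hB v hv u hu)) Y (fun x hx => hx.1) ?_
    · have hL : {v | IsLinear (Function.swap A) v ∧ v ∉ K} = L := by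
        ext v
        exact and_congr_left fun _ => and_comm
      rwa [hL] at h
    rintro x ⟨⟨i, rfl⟩, hx⟩
    by_contra hcon
    push Not at hcon
    apply hx
    unfold indeg
    rw [Set.ncard_eq_one]
    refine ⟨c (i - 1), ?_⟩
    ext z
    simp only [Set.mem_setOf_eq, Set.mem_singleton_iff]
    constructor
    · intro h
      obtain ⟨j, h1, h2⟩ := hcon z h
      rw [h1, hinj h2, add_sub_cancel_right]
    · rintro rfl
      have := hcyc (i - 1)
      rwa [sub_add_cancel] at this
  let M : Set V := {v | IsLinear A v ∧ v ∈ K}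
  have hK : K.ncard = q := by
    rw [Set.ncard_range_of_injective hinj, Nat.card_zmod]
  have hcov : K ⊆ M ∪ (X ∪ Y) := by
    intro v hv
    by_cases h1 : outdeg A v = 1
    · by_cases h2 : indeg A v = 1
      · exact Or.inl ⟨⟨h2, h1⟩, hv⟩
      · exact Or.inr (Or.inr ⟨hv, h2⟩)
    · exact Or.inr (Or.inl ⟨hv, h1⟩)
  have h1 : q ≤ M.ncard + (X.ncard + Y.ncard) := by
    calc q = K.ncard := hK.symm
      _ ≤ (M ∪ (X ∪ Y)).ncard := Set.ncard_le_ncard hcov (Set.toFinite _)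
      _ ≤ M.ncard + (X ∪ Y).ncard := Set.ncard_union_le _ _
      _ ≤ _ := Nat.add_le_add_left (Set.ncard_union_le _ _) _
  have h2 : M.ncard + L.ncard = {v : V | IsLinear A v}.ncard := by
    rw [← Set.ncard_union_eq _ (Set.toFinite _) (Set.toFinite _)]
    · congr 1
      ext v
      simp only [M, L, Set.mem_union, Set.mem_setOf_eq]
      tauto
    · rw [Set.disjoint_left]
      intro v hv hv'
      exact hv'.2 hv.2
  omega
end
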